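/- arXiv:1708.04579 — 2 statements merged into one kernel-verified Lean document; each statement's English description precedes it below -/
import Mathlib

section
/- (Parallelogram inequality) Let f : ℤⁿ → ℝ ∪ {+∞} be a globally or locally discrete midpoint convex function, let x ∈ dom f, and let A_1 ⊆ A_2 ⊆ … ⊆ A_m and B_1 ⊇ B_2 ⊇ … ⊇ B_m be subsets of {1,…,n} with A_m ∩ B_1 = ∅ and A_1 ∪ B_m ≠ ∅. Then for every bipartition (I, J) of {1,…,m} (I ∩ J = ∅, I ∪ J = {1,…,m}), setting d₁ = Σ_{i∈I} (1_{A_i} − 1_{B_i}) and d₂ = Σ_{j∈J} (1_{A_j} − 1_{B_j}), one has f(x) + f(x + d₁ + d₂) ≥ f(x + d₁) + f(x + d₂). -/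
/-- The ℓ∞-norm of an integer vector, as a natural number. -/
def linf {n : ℕ} (z : Fin n → ℤ) : ℕ :=
  Finset.univ.sup fun i => (z i).natAbs

/-- Componentwise round-up of (x+y)/2. -/
def avgUp {n : ℕ} (x y : Fin n → ℤ) : Fin n → ℤ :=
  fun i => ⌈((x i + y i : ℚ)) / 2⌉

/-- Componentwise round-down of (x+y)/2. -/
def avgDown {n : ℕ} (x y : Fin n → ℤ) : Fin n → ℤ :=
  fun i => ⌊((x i + y i : ℚ)) / 2⌋

/-- A set `S ⊆ ℤⁿ` is discrete midpoint convex. -/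
def DMCSet {n : ℕ} (S : Set (Fin n → ℤ)) : Prop :=
  ∀ ⦃x⦄, x ∈ S → ∀ ⦃y⦄, y ∈ S → 2 ≤ linf (x - y) →
    avgUp x y ∈ S ∧ avgDown x y ∈ S

/-- `f` satisfies discrete midpoint convexity for the pair `(x, y)`.
Values are in `ℝ ∪ {+∞}`, modeled as `WithTop ℝ`. -/
def DMCPair {n : ℕ} (f : (Fin n → ℤ) → WithTop ℝ) (x y : Fin n → ℤ) : Prop :=
  f (avgUp x y) + f (avgDown x y) ≤ f x + f y

/-- `f` is globally discrete midpoint convex. -/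
def GloballyDMC {n : ℕ} (f : (Fin n → ℤ) → WithTop ℝ) : Prop :=
  ∀ x y : Fin n → ℤ, 2 ≤ linf (x - y) → DMCPair f x y

/-- The effective domain of `f`. -/
def effDom {n : ℕ} (f : (Fin n → ℤ) → WithTop ℝ) : Set (Fin n → ℤ) :=
  {x | f x ≠ ⊤}

/-- `f` is locally discrete midpoint convex. -/
def LocallyDMC {n : ℕ} (f : (Fin n → ℤ) → WithTop ℝ) : Prop :=
  DMCSet (effDom f) ∧ ∀ x y : Fin n → ℤ, linf (x - y) = 2 → DMCPair f x y

/-- The characteristic (0/1) integer vector of a subset `A ⊆ {1,…,n}`. -/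
def chi {n : ℕ} (A : Finset (Fin n)) : Fin n → ℤ :=
  fun i => if i ∈ A then 1 else 0

/-!
By Hermite's identity `∑ k < m, ⌊(t + k) / m⌋ = t`, a vector `d` with `‖d‖∞ = m` is the sum of the
`m` steps `⌊(d + k) / m⌋`, and every nested family of steps `1_{A_k} - 1_{B_k}` as in the theorem
arises in this way. For `m = 2` the steps are `⌊d/2⌋` and `⌈d/2⌉`, so discrete midpoint convexity
speaks about the two intermediate points between `x` and `x + d`.

A discrete midpoint convex set containing `x` and `x + d` contains `x` plus every subsum of the
steps of `d`. This is proved by induction on `m`: once a single nontrivial subsum is known to be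
reachable, the induction hypothesis on the intervals of the lattice of subsums gives all others. For
even `m` the midpoint `x + ⌊d/2⌋` is such a subsum. For odd `m` it is not, and one makes a detour
from `x` through `x + ⌈d/2⌉` to the first or the last step.

Hence either the right-hand side is infinite or all the values involved are finite. In the second
case the inequality for pairs at distance `2` is supermodularity on the squares of the lattice of
subsums, which telescopes to supermodularity.
-/

theorem sum_range_add_ediv (t : ℤ) {m : ℕ} (hm : m ≠ 0) :
    ∑ k ∈ Finset.range m, (t + k) / m = t := by
  have sum_succ (s : ℤ) : ∑ k ∈ Finset.range m, (s + 1 + k) / m =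
      ∑ k ∈ Finset.range m, (s + k) / m + 1 := by
    have telescope := Finset.sum_range_sub (fun k : ℕ => (s + k) / (m : ℤ)) m
    have last : (s + m) / (m : ℤ) = s / m + 1 := by
      simpa using Int.add_mul_ediv_right s 1 (Nat.cast_ne_zero.2 hm)
    rw [Finset.sum_sub_distrib, last, Nat.cast_zero, add_zero] at telescope
    simp only [Nat.cast_succ, add_assoc, add_comm (1 : ℤ)] at telescope ⊢
    linarith
  induction t using Int.induction_on with
  | zero =>
    refine Finset.sum_eq_zero fun k hk => ?_
    rw [zero_add]
    exact Int.ediv_eq_zero_of_lt (by positivity) (by exact_mod_cast Finset.mem_range.1 hk)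
  | succ t ih => rw [sum_succ, ih]
  | pred t ih =>
    have := sum_succ (-t - 1)
    rw [sub_add_cancel, ih] at this
    linarith

theorem ediv_eq_ite {a m : ℤ} (hm : 0 < m) (h₁ : -m ≤ a) (h₂ : a < 2 * m) :
    a / m = if a < 0 then -1 else if a < m then 0 else 1 := by
  split_ifs <;> rw [Int.ediv_eq_iff_of_pos hm] <;> constructor <;> linarith

section Rank

variable {ι : Type*} [LinearOrder ι]

/-- The position of `k` in the increasing enumeration of `K`, counted from `0`. -/
def rank (K : Finset ι) (k : ι) : ℕ :=
  (K.filter (· < k)).card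

variable {K : Finset ι}

theorem rank_lt_card {k : ι} (hk : k ∈ K) : rank K k < K.card :=
  Finset.card_lt_card (Finset.filter_ssubset.2 ⟨k, hk, lt_irrefl k⟩)

theorem strictMonoOn_rank : StrictMonoOn (rank K) K := fun j hj _ _ hjk =>
  Finset.card_lt_card <| (Finset.ssubset_iff_of_subset
    (Finset.monotone_filter_right K fun _ _ h => h.trans hjk)).2
      ⟨j, Finset.mem_filter.2 ⟨hj, hjk⟩, by simp⟩

theorem eq_sum_add_rank_ediv_card {c : ι → ℤ} (hmono : MonotoneOn c K)
    (hspread : ∀ j ∈ K, ∀ k ∈ K, c k ≤ c j + 1) {j : ι} (hj : j ∈ K) :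
    c j = (∑ k ∈ K, c k + rank K j) / K.card := by
  have hsum : ∑ k ∈ K, c k + rank K j = ∑ k ∈ K, (c k + if k < j then 1 else 0) := by
    simp [rank, Finset.sum_add_distrib]
  have lower : ∀ k ∈ K, c j ≤ c k + if k < j then 1 else 0 := fun k hk => by
    split_ifs with h
    · exact hspread k hk j hj
    · simpa using hmono hj hk (not_lt.1 h)
  have upper : ∀ k ∈ K, (c k + if k < j then 1 else 0) ≤ c j + 1 := fun k hk => by
    split_ifs with h
    · simpa using hmono hk hj h.le
    · simpa using hspread j hj k hk
  have hcard : (0 : ℤ) < K.card := by exact_mod_cast Finset.card_pos.2 ⟨j, hj⟩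
  rw [eq_comm, Int.ediv_eq_iff_of_pos hcard, hsum]
  constructor
  · simpa [mul_comm] using Finset.card_nsmul_le_sum K _ _ lower
  · have := Finset.sum_lt_sum upper ⟨j, hj, by simp⟩
    rw [Finset.sum_const, nsmul_eq_mul] at this
    linarith

end Rank

section Subsets

variable {α : Type*} [DecidableEq α] {U : Finset α}

theorem forall_subset_of_intervals {P : Finset α → Prop} {K : Finset α} (hU : 3 ≤ U.card)
    (hKU : K ⊂ U) (hK : K.Nonempty) (empty : P ∅) (middle : P K) (full : P U)
    (interval : ∀ ⦃K M L⦄, K ⊆ M → M ⊆ L → L ⊆ U → L \ K ≠ U → P K → P L → P M) :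
    ∀ L ⊆ U, P L := by
  obtain ⟨a, haK⟩ := hK
  obtain ⟨b, hbU, hbK⟩ := Finset.exists_of_ssubset hKU
  replace hKU := hKU.subset
  have of_ne_compl : ∀ L ⊆ U, L ≠ U \ K → P L := by
    intro L hL hne
    have inter : P (L ∩ K) :=
      interval (Finset.empty_subset _) Finset.inter_subset_right hKU (by grind) empty middle
    have union : P (L ∪ K) :=
      interval Finset.subset_union_right (Finset.union_subset hL hKU) subset_rfl (by grind)
        middle full
    exact interval Finset.inter_subset_left Finset.subset_union_left
      (Finset.union_subset hL hKU) (by grind) inter union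
  intro L hL
  by_cases hLK : L = U \ K
  · refine interval (Finset.erase_subset b L) (Finset.subset_insert a L)
      (Finset.insert_subset (hKU haK) hL) ?_ (of_ne_compl _ (by grind) (by grind))
      (of_ne_compl _ (by grind) (by grind))
    intro h
    have : U ⊆ {a, b} := by grind
    have := (Finset.card_le_card this).trans Finset.card_le_two
    omega
  · exact of_ne_compl L hL hLK

section Supermodular

variable {R : Type*}

/-- Supermodularity of a set function on the subsets of `U`, required only for pairs of sets that
arise from a common subset by adding one element each. -/
def LocallySupermodularOn [Add R] [LE R] (G : Finset α → R) (U : Finset α) : Prop :=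
  ∀ K ⊆ U, ∀ a ∈ U, ∀ b ∈ U, a ∉ K → b ∉ K → a ≠ b →
    G (insert a K) + G (insert b K) ≤ G K + G (insert a (insert b K))

variable [AddCommGroup R] [PartialOrder R] [IsOrderedAddMonoid R] {G : Finset α → R}

namespace LocallySupermodularOn

theorem insert_sub_le_insert_union_sub (hG : LocallySupermodularOn G U) {K J : Finset α}
    (hK : K ⊆ U) (hJ : J ⊆ U) {a : α} (ha : a ∈ U) (haKJ : a ∉ K ∪ J) :
    G (insert a K) - G K ≤ G (insert a (K ∪ J)) - G (K ∪ J) := by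
  induction J using Finset.induction_on with
  | empty => simp
  | insert b J _ ih =>
    refine (ih (by grind) (by grind)).trans ?_
    rw [Finset.union_insert]
    by_cases hb : b ∈ K ∪ J
    · rw [Finset.insert_eq_of_mem hb]
    · rw [sub_le_sub_iff, add_comm (G (insert a (insert b _)))]
      exact hG (K ∪ J) (by grind) a ha b (by grind) (by grind) hb (by grind)

theorem union_sub_le_union_sub (hG : LocallySupermodularOn G U) {K L M : Finset α}
    (hKL : K ⊆ L) (hL : L ⊆ U) (hM : M ⊆ U) (hLM : Disjoint L M) :
    G (K ∪ M) - G K ≤ G (L ∪ M) - G L := by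
  induction M using Finset.induction_on with
  | empty => simp
  | insert a M ha ih =>
    rw [Finset.disjoint_insert_right] at hLM
    have increment := hG.insert_sub_le_insert_union_sub (K := K ∪ M) (J := L) (a := a)
      (by grind) hL (by grind) (by grind)
    rw [show K ∪ M ∪ L = L ∪ M by grind] at increment
    rw [Finset.union_insert, Finset.union_insert]
    calc G (insert a (K ∪ M)) - G K
        = G (insert a (K ∪ M)) - G (K ∪ M) + (G (K ∪ M) - G K) := by abel
      _ ≤ G (insert a (L ∪ M)) - G (L ∪ M) + (G (L ∪ M) - G L) :=
        add_le_add increment (ih (by grind) hLM.2)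
      _ = G (insert a (L ∪ M)) - G L := by abel

theorem add_le_inter_add_union (hG : LocallySupermodularOn G U) {I J : Finset α} (hI : I ⊆ U)
    (hJ : J ⊆ U) : G I + G J ≤ G (I ∩ J) + G (I ∪ J) := by
  have h := hG.union_sub_le_union_sub (K := I ∩ J) (L := J) (M := I \ J) Finset.inter_subset_right
    hJ (Finset.sdiff_subset.trans hI) Finset.disjoint_sdiff
  rw [show I ∩ J ∪ I \ J = I by grind, show J ∪ I \ J = I ∪ J by grind, sub_le_sub_iff] at h
  rwa [add_comm (G (I ∩ J))]

end LocallySupermodularOn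

end Supermodular

end Subsets

section Linf

variable {n : ℕ} {z : Fin n → ℤ}

theorem linf_le_iff {m : ℕ} : linf z ≤ m ↔ ∀ i, (z i).natAbs ≤ m := by
  simp [linf]

theorem natAbs_le_linf (z : Fin n → ℤ) (i : Fin n) : (z i).natAbs ≤ linf z :=
  linf_le_iff.1 le_rfl i

theorem linf_eq_of_forall_le {m : ℕ} (hle : ∀ i, (z i).natAbs ≤ m) {i : Fin n}
    (hi : (z i).natAbs = m) : linf z = m :=
  le_antisymm (linf_le_iff.2 hle) (hi ▸ natAbs_le_linf z i)

theorem exists_natAbs_eq_linf (hz : linf z ≠ 0) : ∃ i, (z i).natAbs = linf z := by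
  have : (Finset.univ : Finset (Fin n)).Nonempty := by
    by_contra h
    simp [linf, Finset.not_nonempty_iff_eq_empty.1 h] at hz
  obtain ⟨i, _, hi⟩ := Finset.exists_mem_eq_sup _ this fun i => (z i).natAbs
  exact ⟨i, hi.symm⟩

theorem linf_neg (z : Fin n → ℤ) : linf (-z) = linf z := by
  simp only [linf, Pi.neg_apply, Int.natAbs_neg]

theorem linf_sub_add (x z : Fin n → ℤ) : linf (x - (x + z)) = linf z := by
  simp [linf]

end Linf

section HermiteStep

variable {n m : ℕ} {d : Fin n → ℤ}

/-- The steps `hermiteStep m d k`, `k < m`, decompose `d` into `m` vectors, by Hermite's identity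
`∑ k < m, ⌊(t + k) / m⌋ = t`. If `m = ‖d‖∞`, they are the vectors `1_{A_k} - 1_{B_k}` for
`A_k = {i | d i ≥ m - k}` and `B_k = {i | d i < -k}`. -/
def hermiteStep (m : ℕ) (d : Fin n → ℤ) (k : ℕ) : Fin n → ℤ :=
  fun i => (d i + k) / m

theorem sum_hermiteStep (hm : m ≠ 0) (d : Fin n → ℤ) :
    ∑ k ∈ Finset.range m, hermiteStep m d k = d := by
  ext i
  simpa [hermiteStep] using sum_range_add_ediv (d i) hm

theorem sum_erase_hermiteStep {k : ℕ} (hk : k < m) (d : Fin n → ℤ) :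
    ∑ j ∈ (Finset.range m).erase k, hermiteStep m d j = d - hermiteStep m d k := by
  rw [Finset.sum_erase_eq_sub (Finset.mem_range.2 hk), sum_hermiteStep (by omega)]

theorem hermiteStep_one (d : Fin n → ℤ) : hermiteStep 1 d 0 = d := by
  ext i
  simp [hermiteStep]

theorem hermiteStep_neg_zero (hm : m ≠ 0) (d : Fin n → ℤ) :
    hermiteStep m (-d) 0 = -hermiteStep m d (m - 1) := by
  ext i
  have hpos : (0 : ℤ) < m := by positivity
  have h := (Int.ediv_eq_iff_of_pos (x := d i + (m - 1 : ℕ)) hpos).1 rfl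
  rw [Pi.neg_apply, hermiteStep, Pi.neg_apply, Nat.cast_zero, add_zero,
    Int.ediv_eq_iff_of_pos hpos, hermiteStep]
  push_cast [Nat.one_le_iff_ne_zero.2 hm] at h ⊢
  constructor <;> linarith

theorem sum_even_hermiteStep {r : ℕ} (hr : r ≠ 0) (d : Fin n → ℤ) :
    ∑ k ∈ (Finset.range r).image (2 * ·), hermiteStep (2 * r) d k = hermiteStep 2 d 0 := by
  rw [Finset.sum_image (fun _ _ _ _ h => by simpa using h)]
  refine .trans (Finset.sum_congr rfl fun j _ => ?_) (sum_hermiteStep hr (hermiteStep 2 d 0))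
  ext i
  simp only [hermiteStep]
  push_cast
  rw [add_zero, ← Int.add_mul_ediv_left _ _ two_ne_zero, Int.ediv_ediv_of_nonneg zero_le_two]

theorem hermiteStep_apply_eq_ite (hd : linf d ≤ m) {k : ℕ} (hk : k < m) (i : Fin n) :
    hermiteStep m d k i = if d i + k < 0 then -1 else if d i + k < m then 0 else 1 := by
  have := (natAbs_le_linf d i).trans hd
  exact ediv_eq_ite (by omega) (by omega) (by omega)

end HermiteStep

section StepChain

variable {n : ℕ} {ι : Type*} [LinearOrder ι] {K L : Finset ι} {v : ι → Fin n → ℤ}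

/-- The steps `v k = 1_{A_k} - 1_{B_k}`, `k ∈ K`, given by an increasing family of sets `A_k` and a
decreasing family of sets `B_k`, where every `A_j` is disjoint from every `B_k` and some coordinate
lies in all `A_k` or in all `B_k`. In terms of the vectors `v k`, disjointness says that no
coordinate takes both values `1` and `-1`, which is the condition `spread`. -/
structure StepChain (K : Finset ι) (v : ι → Fin n → ℤ) : Prop where
  mono : MonotoneOn v K
  spread : ∀ j ∈ K, ∀ k ∈ K, v k ≤ v j + 1
  natAbs_le_one : ∀ k ∈ K, ∀ i, (v k i).natAbs ≤ 1
  full : ∃ i, (∀ k ∈ K, v k i = 1) ∨ ∀ k ∈ K, v k i = -1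

namespace StepChain

theorem subset (hv : StepChain K v) (hLK : L ⊆ K) : StepChain L v where
  mono := hv.mono.mono hLK
  spread j hj k hk := hv.spread j (hLK hj) k (hLK hk)
  natAbs_le_one k hk := hv.natAbs_le_one k (hLK hk)
  full := hv.full.imp fun _ h => h.imp (fun h k hk => h k (hLK hk)) fun h k hk => h k (hLK hk)

theorem linf_sum (hv : StepChain K v) : linf (∑ k ∈ K, v k) = K.card := by
  obtain ⟨i, hi⟩ := hv.full
  refine linf_eq_of_forall_le (fun j => ?_) (i := i) ?_
  · rw [Finset.sum_apply]
    refine (Int.natAbs_sum_le K fun k => v k j).trans ?_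
    simpa using Finset.sum_le_card_nsmul K _ 1 fun k hk => hv.natAbs_le_one k hk j
  · rw [Finset.sum_apply]
    rcases hi with hi | hi <;> simp [Finset.sum_congr rfl hi]

theorem eq_hermiteStep (hv : StepChain K v) {j : ι} (hj : j ∈ K) :
    v j = hermiteStep K.card (∑ k ∈ K, v k) (rank K j) := by
  ext i
  rw [hermiteStep, Finset.sum_apply]
  exact eq_sum_add_rank_ediv_card (c := fun k => v k i) (fun _ hj _ hk h => hv.mono hj hk h i)
    (fun j hj k hk => hv.spread j hj k hk i) hj

end StepChain

theorem stepChain_hermiteStep {m : ℕ} {d : Fin n → ℤ} (hd : linf d = m) (hm : m ≠ 0) :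
    StepChain (Finset.range m) (hermiteStep m d) := by
  have eq_ite {k : ℕ} (hk : k ∈ Finset.range m) :=
    hermiteStep_apply_eq_ite hd.le (Finset.mem_range.1 hk)
  obtain ⟨i, hi⟩ := exists_natAbs_eq_linf (hd ▸ hm)
  refine ⟨fun j hj k hk hjk i => ?_, fun j hj k hk i => ?_, fun k hk i => ?_, i, ?_⟩
  · rw [eq_ite hj, eq_ite hk]
    grind
  · rw [Pi.add_apply, Pi.one_apply, eq_ite hj, eq_ite hk]
    grind
  · rw [eq_ite hk]
    grind
  · have (k) (hk : k ∈ Finset.range m) := eq_ite hk i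
    grind

theorem stepChain_chi_sub_chi {A B : ι → Finset (Fin n)} (hA : MonotoneOn A K)
    (hB : AntitoneOn B K) (hAB : ∀ j ∈ K, ∀ k ∈ K, Disjoint (A j) (B k))
    (hfull : ∃ i, (∀ k ∈ K, i ∈ A k) ∨ ∀ k ∈ K, i ∈ B k) :
    StepChain K fun k => chi (A k) - chi (B k) where
  mono j hj k hk hjk i := by
    have := @hA j hj k hk hjk i
    have := @hB j hj k hk hjk i
    simp only [chi, Pi.sub_apply]
    grind
  spread j hj k hk i := by
    have (h : i ∈ A k) : i ∉ B j := Finset.disjoint_left.1 (hAB k hk j hj) h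
    simp only [chi, Pi.sub_apply, Pi.add_apply, Pi.one_apply]
    grind
  natAbs_le_one k _ i := by
    simp only [chi, Pi.sub_apply]
    grind
  full := by
    obtain ⟨i, hi⟩ := hfull
    have (k) (hk : k ∈ K) (h : i ∈ A k) : i ∉ B k := Finset.disjoint_left.1 (hAB k hk k hk) h
    refine ⟨i, hi.imp (fun h k hk => ?_) fun h k hk => ?_⟩ <;>
    · simp only [chi, Pi.sub_apply]
      grind

end StepChain

section Domain

variable {n : ℕ} {ι : Type*} [LinearOrder ι] {S : Set (Fin n → ℤ)}

theorem avgUp_add (x d : Fin n → ℤ) : avgUp x (x + d) = x + hermiteStep 2 d 1 := by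
  ext i
  have h := Rat.ceil_intCast_div_natCast (x i + (x + d) i) 2
  rw [Int.cast_add, Nat.cast_ofNat, Nat.cast_ofNat] at h
  rw [avgUp, h, Pi.add_apply, Pi.add_apply, hermiteStep]
  omega

theorem avgDown_add (x d : Fin n → ℤ) : avgDown x (x + d) = x + hermiteStep 2 d 0 := by
  ext i
  have h := Rat.floor_intCast_div_natCast (x i + (x + d) i) 2
  rw [Int.cast_add, Nat.cast_ofNat, Nat.cast_ofNat] at h
  rw [avgDown, h, Pi.add_apply, Pi.add_apply, hermiteStep]
  omega

theorem DMCSet.add_hermiteStep_two_mem (hS : DMCSet S) {x d : Fin n → ℤ} (hd : 2 ≤ linf d)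
    (hx : x ∈ S) (hxd : x + d ∈ S) :
    x + hermiteStep 2 d 1 ∈ S ∧ x + hermiteStep 2 d 0 ∈ S := by
  rw [← avgUp_add, ← avgDown_add]
  exact hS hx hxd (by rwa [linf_sub_add])

/-- For any two points `x` and `x + d` of `S` at distance `m`, all subsums of the decomposition of
`d` into `m` steps lead from `x` to points of `S`. -/
def StepClosed (S : Set (Fin n → ℤ)) (m : ℕ) : Prop :=
  ∀ ⦃x d : Fin n → ℤ⦄, linf d = m → x ∈ S → x + d ∈ S →
    ∀ L ⊆ Finset.range m, x + ∑ k ∈ L, hermiteStep m d k ∈ S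

theorem StepClosed.add_sum_mem {K L : Finset ι} (hS : StepClosed S K.card)
    {v : ι → Fin n → ℤ} (hv : StepChain K v) {x : Fin n → ℤ} (hx : x ∈ S)
    (hxK : x + ∑ k ∈ K, v k ∈ S) (hL : L ⊆ K) : x + ∑ k ∈ L, v k ∈ S := by
  have hsum : ∑ k ∈ L, v k =
      ∑ j ∈ L.image (rank K), hermiteStep K.card (∑ k ∈ K, v k) j := by
    rw [Finset.sum_image (strictMonoOn_rank.injOn.mono hL)]
    exact Finset.sum_congr rfl fun k hk => hv.eq_hermiteStep (hL hk)
  rw [hsum]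
  refine hS hv.linf_sum hx hxK _ (Finset.image_subset_iff.2 fun k hk => ?_)
  exact Finset.mem_range.2 (rank_lt_card (hL hk))

theorem StepClosed.add_sum_mem_of_subset_of_subset {K L M : Finset ι}
    (hS : StepClosed S (L \ K).card) {v : ι → Fin n → ℤ} (hv : StepChain L v) {x : Fin n → ℤ}
    (hKM : K ⊆ M) (hML : M ⊆ L) (hxK : x + ∑ k ∈ K, v k ∈ S) (hxL : x + ∑ k ∈ L, v k ∈ S) :
    x + ∑ k ∈ M, v k ∈ S := by
  have sum_split {N : Finset ι} (hN : K ⊆ N) :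
      x + ∑ k ∈ N, v k = x + ∑ k ∈ K, v k + ∑ k ∈ N \ K, v k := by
    rw [← Finset.sum_sdiff hN, add_assoc, add_comm (∑ k ∈ K, v k)]
  rw [sum_split (hKM.trans hML)] at hxL
  rw [sum_split hKM]
  exact hS.add_sum_mem (hv.subset Finset.sdiff_subset) hxK hxL
    (Finset.sdiff_subset_sdiff hML subset_rfl)

theorem linf_hermiteStep_two_zero {r : ℕ} {d : Fin n → ℤ} (hd : linf d = 2 * r + 1) {i : Fin n}
    (hi : d i = -(2 * r + 1)) : linf (hermiteStep 2 d 0) = r + 1 := by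
  refine linf_eq_of_forall_le (fun j => ?_) (i := i) ?_
  · have := natAbs_le_linf d j
    simp only [hermiteStep]
    omega
  · simp only [hermiteStep]
    omega

/-- The two halves `⌈d/2⌉` and `⌊d/2⌋` of `d` with the second step of `⌊d/2⌋` omitted. If
`‖d‖∞ = 2r + 1` is attained at a negative coordinate, this vector has norm `2r` but still the same
first step as `d`, so it reduces the odd norm `2r + 1` to smaller ones. -/
def oddDetour (r : ℕ) (d : Fin n → ℤ) : Fin n → ℤ :=
  hermiteStep 2 d 1 + (hermiteStep 2 d 0 - hermiteStep (r + 1) (hermiteStep 2 d 0) 1)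

theorem oddDetour_apply {r : ℕ} {d : Fin n → ℤ} {i : Fin n}
    (hi : (d i).natAbs ≤ 2 * r + 1) :
    oddDetour r d i = d i - if d i + 2 < 0 then -1 else if d i < 2 * r then 0 else 1 := by
  have halves : (d i + 1) / 2 + d i / 2 = d i := by omega
  have omitted := ediv_eq_ite (a := d i / 2 + 1) (m := r + 1) (by omega) (by omega) (by omega)
  simp only [oddDetour, hermiteStep, Pi.add_apply, Pi.sub_apply]
  push_cast
  rw [add_zero, omitted]
  split_ifs <;> omega

theorem linf_oddDetour {r : ℕ} (hr : r ≠ 0) {d : Fin n → ℤ} (hd : linf d = 2 * r + 1) {i : Fin n}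
    (hi : d i = -(2 * r + 1)) : linf (oddDetour r d) = 2 * r := by
  refine linf_eq_of_forall_le (fun j => ?_) (i := i) ?_
  · have hj := hd ▸ natAbs_le_linf d j
    rw [oddDetour_apply hj]
    split_ifs <;> omega
  · rw [oddDetour_apply (by omega)]
    split_ifs <;> omega

theorem hermiteStep_oddDetour_zero {r : ℕ} (hr : r ≠ 0) {d : Fin n → ℤ}
    (hd : linf d = 2 * r + 1) :
    hermiteStep (2 * r) (oddDetour r d) 0 = hermiteStep (2 * r + 1) d 0 := by
  ext i
  have hi := hd ▸ natAbs_le_linf d i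
  have hdetour := oddDetour_apply hi
  rw [hermiteStep_apply_eq_ite hd.le (by omega), hermiteStep, Nat.cast_zero, add_zero, add_zero,
    ediv_eq_ite (by omega) (by grind) (by grind), hdetour]
  push_cast
  split_ifs <;> omega

theorem DMCSet.add_oddDetour_mem (hS : DMCSet S) {r : ℕ} (hr : r ≠ 0)
    (closed : StepClosed S (r + 1)) {x d : Fin n → ℤ} (hd : linf d = 2 * r + 1) {i : Fin n}
    (hi : d i = -(2 * r + 1)) (hx : x ∈ S) (hxd : x + d ∈ S) : x + oddDetour r d ∈ S := by
  have upper := (hS.add_hermiteStep_two_mem (by omega) hx hxd).1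
  have halves : x + hermiteStep 2 d 1 + hermiteStep 2 d 0 = x + d := by
    ext i
    simp only [hermiteStep, Pi.add_apply]
    omega
  have := closed (linf_hermiteStep_two_zero hd hi) upper (halves ▸ hxd)
    _ (Finset.erase_subset 1 _)
  rwa [sum_erase_hermiteStep (by omega), add_assoc] at this

theorem DMCSet.add_first_hermiteStep_mem (hS : DMCSet S) {r : ℕ} (hr : r ≠ 0)
    (closed : ∀ m < 2 * r + 1, StepClosed S m) {x d : Fin n → ℤ} (hd : linf d = 2 * r + 1)
    {i : Fin n} (hi : d i = -(2 * r + 1)) (hx : x ∈ S) (hxd : x + d ∈ S) :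
    x + hermiteStep (2 * r + 1) d 0 ∈ S := by
  have detour := hS.add_oddDetour_mem hr (closed (r + 1) (by omega)) hd hi hx hxd
  have := closed (2 * r) (by omega) (linf_oddDetour hr hd hi) hx detour {0}
    (by simpa using Nat.pos_of_ne_zero hr)
  rwa [Finset.sum_singleton, hermiteStep_oddDetour_zero hr hd] at this

theorem DMCSet.add_last_hermiteStep_omitted_mem (hS : DMCSet S) {r : ℕ} (hr : r ≠ 0)
    (closed : ∀ m < 2 * r + 1, StepClosed S m) {x d : Fin n → ℤ} (hd : linf d = 2 * r + 1)
    {i : Fin n} (hi : d i = 2 * r + 1) (hx : x ∈ S) (hxd : x + d ∈ S) :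
    x + (d - hermiteStep (2 * r + 1) d (2 * r)) ∈ S := by
  have := hS.add_first_hermiteStep_mem hr closed (d := -d) (by rwa [linf_neg]) (i := i)
    (by simp [hi]) hxd (by simpa using hx)
  rwa [hermiteStep_neg_zero (by omega), Nat.add_sub_cancel, ← sub_eq_add_neg, add_sub_assoc]
    at this

theorem DMCSet.exists_ssubset_add_sum_mem (hS : DMCSet S) {m : ℕ} (hm : 2 ≤ m)
    (closed : ∀ l < m, StepClosed S l) {x d : Fin n → ℤ} (hd : linf d = m) (hx : x ∈ S)
    (hxd : x + d ∈ S) :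
    ∃ K ⊂ Finset.range m, K.Nonempty ∧ x + ∑ k ∈ K, hermiteStep m d k ∈ S := by
  rcases Nat.even_or_odd' m with ⟨r, rfl | rfl⟩
  · refine ⟨(Finset.range r).image (2 * ·), ?_,
      (Finset.nonempty_range_iff.2 (by omega)).image _, ?_⟩
    · exact (Finset.ssubset_iff_of_subset (by grind)).2 ⟨1, by grind⟩
    · rw [sum_even_hermiteStep (by omega)]
      exact (hS.add_hermiteStep_two_mem (by omega) hx hxd).2
  · have hr : r ≠ 0 := by omega
    obtain ⟨i, hi⟩ := exists_natAbs_eq_linf (z := d) (by omega)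
    rcases Int.natAbs_eq (d i) with hpos | hneg
    · refine ⟨(Finset.range (2 * r + 1)).erase (2 * r), Finset.erase_ssubset (by simp),
        ⟨0, by grind⟩, ?_⟩
      rw [sum_erase_hermiteStep (by omega)]
      exact hS.add_last_hermiteStep_omitted_mem hr closed hd (i := i) (by omega) hx hxd
    · refine ⟨{0}, (Finset.ssubset_iff_of_subset (by simp)).2 ⟨1, by grind⟩, by simp, ?_⟩
      rw [Finset.sum_singleton]
      exact hS.add_first_hermiteStep_mem hr closed hd (i := i) (by omega) hx hxd

theorem DMCSet.stepClosed_of_le_two (hS : DMCSet S) {m : ℕ} (hm : m ≤ 2) : StepClosed S m := by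
  intro x d hd hx hxd L hL
  interval_cases m
  · simpa [Finset.subset_empty.1 hL] using hx
  · obtain rfl | rfl := Finset.subset_singleton_iff.1 hL
    · simpa using hx
    · simpa [hermiteStep_one] using hxd
  · have halves := hS.add_hermiteStep_two_mem hd.ge hx hxd
    have subsets : ∀ L ∈ (Finset.range 2).powerset,
        L = ∅ ∨ L = {0} ∨ L = {1} ∨ L = Finset.range 2 := by decide
    obtain rfl | rfl | rfl | rfl := subsets L (Finset.mem_powerset.2 hL)
    · simpa using hx
    · simpa using halves.2
    · simpa using halves.1
    · rwa [sum_hermiteStep two_ne_zero]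

theorem DMCSet.stepClosed (hS : DMCSet S) (m : ℕ) : StepClosed S m := by
  induction m using Nat.strong_induction_on with
  | _ m closed =>
  rcases le_or_gt m 2 with hm | hm
  · exact hS.stepClosed_of_le_two hm
  intro x d hd hx hxd
  obtain ⟨K, hK, hKne, hxK⟩ := hS.exists_ssubset_add_sum_mem hm.le closed hd hx hxd
  have chain := stepChain_hermiteStep hd (by omega)
  refine forall_subset_of_intervals (P := fun L => x + ∑ k ∈ L, hermiteStep m d k ∈ S)
    (by rw [Finset.card_range]; omega) hK hKne (by simpa using hx) hxK
    (by rwa [sum_hermiteStep (by omega)]) fun K M L hKM hML hL hne => ?_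
  have hcard : (L \ K).card < m := by
    simpa using Finset.card_lt_card ((Finset.sdiff_subset.trans hL).ssubset_of_ne hne)
  exact (closed _ hcard).add_sum_mem_of_subset_of_subset (chain.subset hL) hKM hML

end Domain

section Parallelogram

variable {n : ℕ} {ι : Type*} [LinearOrder ι] {f : (Fin n → ℤ) → WithTop ℝ} {v : ι → Fin n → ℤ}

theorem GloballyDMC.locallyDMC (hf : GloballyDMC f) : LocallyDMC f := by
  refine ⟨fun x hx y hy hxy => ?_, fun x y hxy => hf x y hxy.ge⟩
  have := (hf x y hxy).trans_lt (WithTop.add_lt_top.2 ⟨hx.lt_top, hy.lt_top⟩)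
  rw [WithTop.add_lt_top] at this
  exact ⟨this.1.ne, this.2.ne⟩

theorem LocallyDMC.add_le_add_of_pair (hf : LocallyDMC f) {a b : ι} (hab : a ≠ b)
    (hv : StepChain {a, b} v) (x : Fin n → ℤ) :
    f (x + v a) + f (x + v b) ≤ f x + f (x + (v a + v b)) := by
  wlog hlt : a < b generalizing a b
  · rw [add_comm (f _), add_comm (v a)]
    exact this hab.symm (Finset.pair_comm a b ▸ hv) (hab.lt_or_gt.resolve_left hlt)
  have hdown : v a = hermiteStep 2 (v a + v b) 0 := by
    simpa [Finset.sum_pair hab, Finset.card_pair hab, rank, Finset.filter_insert,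
      Finset.filter_singleton, hlt.not_gt] using hv.eq_hermiteStep (j := a) (by simp)
  have hup : v b = hermiteStep 2 (v a + v b) 1 := by
    simpa [Finset.sum_pair hab, Finset.card_pair hab, rank, Finset.filter_insert,
      Finset.filter_singleton, hlt] using hv.eq_hermiteStep (j := b) (by simp)
  have hnorm : linf (v a + v b) = 2 := by
    simpa [Finset.sum_pair hab, Finset.card_pair hab] using hv.linf_sum
  have midpoint := hf.2 x (x + (v a + v b)) (by rwa [linf_sub_add])
  rwa [DMCPair, avgUp_add, avgDown_add, ← hup, ← hdown, add_comm] at midpoint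

theorem LocallyDMC.locallySupermodularOn (hf : LocallyDMC f) {U : Finset ι} (hv : StepChain U v)
    {x : Fin n → ℤ} {G : Finset ι → ℝ} (hG : ∀ K ⊆ U, f (x + ∑ k ∈ K, v k) = G K) :
    LocallySupermodularOn G U := by
  intro K hK a ha b hb haK hbK hab
  have haU : insert a K ⊆ U := Finset.insert_subset ha hK
  have hbU : insert b K ⊆ U := Finset.insert_subset hb hK
  have habU : insert a (insert b K) ⊆ U := Finset.insert_subset ha hbU
  have sum_insert {k : ι} {L : Finset ι} (hk : k ∉ L) :
      x + ∑ j ∈ insert k L, v j = x + ∑ j ∈ L, v j + v k := by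
    rw [Finset.sum_insert hk, add_comm (v k), add_assoc]
  have pair := hf.add_le_add_of_pair hab (hv.subset (L := {a, b}) (by grind)) (x + ∑ k ∈ K, v k)
  rw [add_comm (v a), ← add_assoc, ← sum_insert haK, ← sum_insert hbK,
    ← sum_insert (by grind : a ∉ insert b K), hG _ hK, hG _ haU, hG _ hbU, hG _ habU] at pair
  exact_mod_cast pair

theorem LocallyDMC.add_le_add_of_stepChain (hf : LocallyDMC f) {I J : Finset ι}
    (hv : StepChain (I ∪ J) v) (hIJ : Disjoint I J) {x : Fin n → ℤ} (hx : x ∈ effDom f) :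
    f (x + ∑ i ∈ I, v i) + f (x + ∑ j ∈ J, v j) ≤ f x + f (x + ∑ k ∈ I ∪ J, v k) := by
  by_cases hxv : f (x + ∑ k ∈ I ∪ J, v k) = ⊤
  · simp [hxv]
  have finite (K) (hK : K ⊆ I ∪ J) : ∃ r : ℝ, f (x + ∑ k ∈ K, v k) = r :=
    (WithTop.ne_top_iff_exists.1 ((hf.1.stepClosed _).add_sum_mem hv hx hxv hK)).imp
      fun _ h => h.symm
  choose! G hG using finite
  have hempty := hG ∅ (Finset.empty_subset _)
  rw [Finset.sum_empty, add_zero] at hempty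
  have := (hf.locallySupermodularOn hv hG).add_le_inter_add_union (I := I) (J := J)
    Finset.subset_union_left Finset.subset_union_right
  rw [Finset.disjoint_iff_inter_eq_empty.1 hIJ] at this
  rw [hG I Finset.subset_union_left, hG J Finset.subset_union_right, hG _ subset_rfl, hempty]
  exact_mod_cast this

theorem stepChain_Icc_chi_sub_chi {m : ℕ} {A B : ℕ → Finset (Fin n)}
    (hA : ∀ k, 1 ≤ k → k < m → A k ⊆ A (k + 1)) (hB : ∀ k, 1 ≤ k → k < m → B (k + 1) ⊆ B k)
    (hAB : A m ∩ B 1 = ∅) (hne : (A 1 ∪ B m).Nonempty) :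
    StepChain (Finset.Icc 1 m) fun k => chi (A k) - chi (B k) := by
  have hAmono : MonotoneOn A (Finset.Icc 1 m) := by
    rw [Finset.coe_Icc]
    exact monotoneOn_of_le_add_one Set.ordConnected_Icc fun k _ hk hk' => hA k hk.1 hk'.2
  have hBanti : AntitoneOn B (Finset.Icc 1 m) := by
    rw [Finset.coe_Icc]
    exact antitoneOn_of_add_one_le Set.ordConnected_Icc fun k _ hk hk' => hB k hk.1 hk'.2
  have first {k : ℕ} (hk : k ∈ Finset.Icc 1 m) : 1 ∈ Finset.Icc 1 m ∧ 1 ≤ k := by grind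
  have last {k : ℕ} (hk : k ∈ Finset.Icc 1 m) : m ∈ Finset.Icc 1 m ∧ k ≤ m := by grind
  have hA_first {k : ℕ} (hk : k ∈ Finset.Icc 1 m) := hAmono (first hk).1 hk (first hk).2
  have hA_last {k : ℕ} (hk : k ∈ Finset.Icc 1 m) := hAmono hk (last hk).1 (last hk).2
  have hB_first {k : ℕ} (hk : k ∈ Finset.Icc 1 m) := hBanti (first hk).1 hk (first hk).2
  have hB_last {k : ℕ} (hk : k ∈ Finset.Icc 1 m) := hBanti hk (last hk).1 (last hk).2
  refine stepChain_chi_sub_chi hAmono hBanti (fun j hj k hk => ?_) ?_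
  · exact (Finset.disjoint_iff_inter_eq_empty.2 hAB).mono (hA_last hj) (hB_first hk)
  · exact hne.imp fun i hi => (Finset.mem_union.1 hi).imp
      (fun h k hk => hA_first hk h) fun h k hk => hB_last hk h

end Parallelogram

/-- Parallelogram inequality for (globally or locally) discrete midpoint convex
functions. -/
theorem parallelogram_inequality {n : ℕ} (f : (Fin n → ℤ) → WithTop ℝ)
    (hdmc : GloballyDMC f ∨ LocallyDMC f)
    (x : Fin n → ℤ) (hx : x ∈ effDom f)
    (m : ℕ) (hm : 1 ≤ m)
    (A B : ℕ → Finset (Fin n))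
    (hA : ∀ k, 1 ≤ k → k < m → A k ⊆ A (k + 1))
    (hB : ∀ k, 1 ≤ k → k < m → B (k + 1) ⊆ B k)
    (hAB : A m ∩ B 1 = ∅)
    (hne : (A 1 ∪ B m).Nonempty)
    (I J : Finset ℕ) (hIJ : Disjoint I J) (hIJu : I ∪ J = Finset.Icc 1 m)
    (d₁ d₂ : Fin n → ℤ)
    (hd₁ : d₁ = ∑ i ∈ I, (chi (A i) - chi (B i)))
    (hd₂ : d₂ = ∑ j ∈ J, (chi (A j) - chi (B j))) :
    f (x + d₁) + f (x + d₂) ≤ f x + f (x + d₁ + d₂) := by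
  have hf : LocallyDMC f := hdmc.elim GloballyDMC.locallyDMC id
  have chain := stepChain_Icc_chi_sub_chi hA hB hAB hne
  rw [← hIJu] at chain
  have := hf.add_le_add_of_stepChain chain hIJ hx
  rwa [Finset.sum_union hIJ, ← add_assoc, ← hd₁, ← hd₂] at this
end

section
/- Let S ⊆ ℤⁿ be a discrete midpoint convex set and α a positive integer. Then the scaled set S^α = {x ∈ ℤⁿ : αx ∈ S} is discrete midpoint convex. -/
/-!
Suppose `d = y - x` has `ℓ∞`-norm `m`, attained with a positive sign. With `A k = {i | k ≤ d i}` and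
`B k = {i | d i ≤ k - m - 1}`, the displacement `d` is the sum of the unit steps `𝟙_{A k} - 𝟙_{B k}`
for `k = 1, …, m`, and the key fact is that adding to `x ∈ S` any subfamily of these steps gives a
point of `S` whenever `y ∈ S`. Successive halving of distances reaches `x` plus the first step. It
follows that the first step may also be omitted: reach the sum of the first two steps, take the
rounded-down midpoint with `x` to isolate the second one, and recurse from there. Deciding about one
step at a time then yields every subfamily.

For `d = a • v` the points so obtained include `x + k • v` for `k = 0, …, a`. Taking rounded
midpoints of neighbours, row by row, turns these `a + 1` points into a triangular array whose tip is
`x + a • w`, where `w` is `v / 2` rounded. This is the midpoint required by the scaled set.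
-/

/-- The vector `d` has `ℓ∞`-norm `m`, attained at the coordinate `i₀` with a positive sign. Fixing
the sign loses no generality, as midpoints are symmetric in the endpoints. -/
structure PeaksAt {ι : Type*} (d : ι → ℤ) (i₀ : ι) (m : ℕ) : Prop where
  abs_le : ∀ i, |d i| ≤ m
  apply_eq : d i₀ = m

/-- The first unit step of a coordinate with displacement `t ∈ [-m, m]`, that is `⌈t / m⌉`; in the
notation `A k`, `B k` above, `firstStep m ∘ d` is `𝟙_{A 1} - 𝟙_{B 1}`. -/
def firstStep (m : ℕ) (t : ℤ) : ℤ :=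
  if 0 < t then 1 else if t = -m then -1 else 0

/-- The second unit step of a coordinate with displacement `t ∈ [-(m + 1), m + 1]`: the first step
of what the first step leaves over. The index `m` is one less than the norm, to avoid truncated
subtraction. -/
def secondStep (m : ℕ) (t : ℤ) : ℤ :=
  firstStep m (t - firstStep (m + 1) t)

/-- The displacement, for a coordinate with total displacement `t ∈ [-m, m]`, given by a subfamily
of the `m` unit steps. The subfamily is encoded by its counting function `c`: the `k`-th step is
taken `c k - c (k - 1)` times. -/
def stepMove (m : ℕ) (c : ℤ → ℤ) (t : ℤ) : ℤ :=
  if 0 ≤ t then c t - c 0 else c (m + t) - c m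

section Scalar

variable {h m : ℕ} {t : ℤ}

lemma firstStep_one (ht : |t| ≤ 1) : firstStep 1 t = t := by
  grind [firstStep]

lemma firstStep_ceilHalf (ht : |t| ≤ (2 * h : ℕ)) :
    firstStep h ((t + 1) / 2) = firstStep (2 * h) t := by
  grind [firstStep]

lemma firstStep_floorHalf_add_firstStep (h : ℕ) (t : ℤ) :
    firstStep (h + 1) (t / 2 + firstStep (h + 1) (t - t / 2)) = firstStep (2 * h + 1) t := by
  grind [firstStep]

lemma abs_sub_firstStep_le (ht : |t| ≤ (m + 1 : ℕ)) : |t - firstStep (m + 1) t| ≤ m := by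
  grind [firstStep]

lemma firstStep_sub_secondStep (hm : 0 < m) (ht : |t| ≤ (m + 1 : ℕ)) :
    firstStep m (t - secondStep m t) = firstStep (m + 1) t := by
  grind [secondStep, firstStep]

lemma firstStep_add_secondStep_floorHalf (hm : 0 < m) (t : ℤ) :
    (firstStep (m + 1) t + secondStep m t) / 2 = secondStep m t := by
  grind [secondStep, firstStep]

lemma stepMove_succ (m : ℕ) (c : ℤ → ℤ) (t : ℤ) :
    stepMove (m + 1) c t = (c 1 - c 0) * firstStep (m + 1) t +
      stepMove m (fun k => c (k + 1)) (t - firstStep (m + 1) t) := by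
  simp only [stepMove, firstStep]
  grind

lemma mul_add_one_ediv_eq_or {k a : ℕ} (hk : k ≤ a) (j : ℤ) :
    k * (j + 1) / a = k * j / a ∨ k * (j + 1) / a = k * j / a + 1 := by
  obtain rfl | ha := a.eq_zero_or_pos
  · simp
  have ha' : (0 : ℤ) < a := mod_cast ha
  have hlower : k * j / a ≤ k * (j + 1) / a := Int.ediv_le_ediv ha' (by grind)
  have hupper : k * (j + 1) / a ≤ k * j / a + 1 :=
    calc k * (j + 1) / a ≤ (k * j + 1 * a) / a := Int.ediv_le_ediv ha' (by grind)
      _ = k * j / a + 1 := Int.add_mul_ediv_right _ _ ha'.ne'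
  omega

lemma stepMove_mul_ediv (k : ℕ) {a : ℕ} (ha : 0 < a) (m : ℕ) (t : ℤ) :
    stepMove (a * m) (fun j => k * j / a) (a * t) = k * t := by
  have hdiv (s : ℤ) : k * (a * s) / a = k * s := by
    rw [mul_left_comm, Int.mul_ediv_cancel_left _ (mod_cast ha.ne')]
  simp only [stepMove, Nat.cast_mul, ← mul_add, hdiv]
  split_ifs <;> simp [mul_add]

end Scalar

namespace PeaksAt

variable {ι : Type*} {d : ι → ℤ} {i₀ : ι} {m : ℕ}

lemma map (hd : PeaksAt d i₀ m) (φ : ℤ → ℤ) {k : ℕ} (hle : ∀ t : ℤ, |t| ≤ m → |φ t| ≤ k)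
    (heq : φ m = k) : PeaksAt (fun i => φ (d i)) i₀ k where
  abs_le i := hle _ (hd.abs_le i)
  apply_eq := by rw [hd.apply_eq, heq]

lemma nsmul (hd : PeaksAt d i₀ m) (k : ℕ) : PeaksAt (k • d) i₀ (k * m) where
  abs_le i := by simpa [abs_mul] using mul_le_mul_of_nonneg_left (hd.abs_le i) k.cast_nonneg
  apply_eq := by simp [hd.apply_eq]

lemma sub_firstStep (hd : PeaksAt d i₀ (m + 1)) : PeaksAt (d - firstStep (m + 1) ∘ d) i₀ m :=
  hd.map (fun t => t - firstStep (m + 1) t) (fun _ => abs_sub_firstStep_le) (by grind [firstStep])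

lemma sub_secondStep (hm : 0 < m) (hd : PeaksAt d i₀ (m + 1)) :
    PeaksAt (d - secondStep m ∘ d) i₀ m :=
  hd.map (fun t => t - secondStep m t) (by grind [secondStep, firstStep])
    (by grind [secondStep, firstStep])

lemma firstStep_add_secondStep (hm : 0 < m) (hd : PeaksAt d i₀ (m + 1)) :
    PeaksAt (firstStep (m + 1) ∘ d + secondStep m ∘ d) i₀ 2 :=
  hd.map (fun t => firstStep (m + 1) t + secondStep m t) (by grind [secondStep, firstStep])
    (by grind [secondStep, firstStep])

end PeaksAt

variable {n : ℕ} {S : Set (Fin n → ℤ)} {x d : Fin n → ℤ} {i₀ : Fin n} {m : ℕ}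

lemma natAbs_apply_le_linf (d : Fin n → ℤ) (i : Fin n) : (d i).natAbs ≤ linf d :=
  Finset.le_sup (f := fun i => (d i).natAbs) (Finset.mem_univ i)

lemma exists_peaksAt_or_neg (hd : 0 < linf d) :
    ∃ i₀, PeaksAt d i₀ (linf d) ∨ PeaksAt (-d) i₀ (linf d) := by
  obtain ⟨i, -, -⟩ := Finset.lt_sup_iff.mp hd
  obtain ⟨i₀, -, hi₀⟩ := Finset.exists_mem_eq_sup Finset.univ ⟨i, Finset.mem_univ i⟩
    fun i => (d i).natAbs
  have hle (i : Fin n) : |d i| ≤ linf d := by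
    rw [Int.abs_eq_natAbs]
    exact_mod_cast natAbs_apply_le_linf d i
  have heq : |d i₀| = linf d := by rw [Int.abs_eq_natAbs, linf, hi₀]
  refine ⟨i₀, (abs_choice (d i₀)).imp (fun h => ⟨hle, ?_⟩) fun h => ⟨by simpa using hle, ?_⟩⟩
  · rwa [h] at heq
  · rwa [h] at heq

lemma PeaksAt.le_linf (hd : PeaksAt d i₀ m) : m ≤ linf d := by
  simpa [hd.apply_eq] using natAbs_apply_le_linf d i₀

lemma avgUp_comm (x y : Fin n → ℤ) : avgUp x y = avgUp y x := by
  ext i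
  simp only [avgUp, add_comm]

lemma avgDown_comm (x y : Fin n → ℤ) : avgDown x y = avgDown y x := by
  ext i
  simp only [avgDown, add_comm]

lemma avgUp_self_add (x d : Fin n → ℤ) : avgUp x (x + d) = x + (d + 1) / 2 := by
  ext i
  have hceil := Rat.ceil_intCast_div_natCast (x i + (x i + d i)) 2
  push_cast at hceil
  simp only [avgUp, Pi.add_apply, Pi.div_apply, Pi.ofNat_apply, Int.cast_add, hceil]
  omega

lemma avgDown_self_add (x d : Fin n → ℤ) : avgDown x (x + d) = x + d / 2 := by
  ext i
  have hfloor := Rat.floor_intCast_div_natCast (x i + (x i + d i)) 2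
  push_cast at hfloor
  simp only [avgDown, Pi.add_apply, Pi.div_apply, Pi.ofNat_apply, Int.cast_add, hfloor]
  omega

theorem dmcSet_iff_peaksAt : DMCSet S ↔ ∀ ⦃x d i₀ m⦄, PeaksAt d i₀ m → 2 ≤ m → x ∈ S → x + d ∈ S →
    x + (d + 1) / 2 ∈ S ∧ x + d / 2 ∈ S := by
  refine ⟨fun hS x d i₀ m hd hm hx hxd => ?_, fun hS x hx y hy hxy => ?_⟩
  · rw [← avgUp_self_add, ← avgDown_self_add, avgUp_comm, avgDown_comm]
    exact hS hxd hx (by simpa using hm.trans hd.le_linf)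
  · obtain ⟨i₀, hd | hd⟩ := exists_peaksAt_or_neg (show 0 < linf (x - y) by omega)
    · have hmid := hS hd hxy hy (by simpa using hx)
      rwa [← avgUp_self_add, ← avgDown_self_add, add_sub_cancel, avgUp_comm, avgDown_comm] at hmid
    · have hmid := hS hd hxy hx (by simpa using hy)
      rwa [← avgUp_self_add, ← avgDown_self_add, neg_sub, add_sub_cancel] at hmid

namespace DMCSet

lemma add_firstStep_mem (hS : DMCSet S) (hd : PeaksAt d i₀ m) (hm : 0 < m) (hx : x ∈ S)
    (hxd : x + d ∈ S) : x + firstStep m ∘ d ∈ S := by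
  induction m using Nat.strong_induction_on generalizing x d with
  | _ m ih =>
    obtain rfl | hm₂ : m = 1 ∨ 2 ≤ m := by omega
    · rwa [show firstStep 1 ∘ d = d from funext fun i => firstStep_one (hd.abs_le i)]
    obtain ⟨hup, hdown⟩ := dmcSet_iff_peaksAt.mp hS hd hm₂ hx hxd
    obtain ⟨h, rfl | rfl⟩ := Nat.even_or_odd' m
    · have hpeak : PeaksAt ((d + 1) / 2) i₀ h :=
        hd.map (fun t => (t + 1) / 2) (by grind) (by grind)
      convert ih h (by omega) hpeak (by omega) hx hup using 2
      exact funext fun i => (firstStep_ceilHalf (hd.abs_le i)).symm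
    · -- For odd `m` neither midpoint need have the right first step, hence the detour: the first
      -- step from `x + d / 2` towards `x + d` leads to a point whose first step from `x` is that of
      -- `d`.
      have hrest : PeaksAt (d - d / 2) i₀ (h + 1) :=
        hd.map (fun t => t - t / 2) (by grind) (by grind)
      have hdetour : x + (d / 2 + firstStep (h + 1) ∘ (d - d / 2)) ∈ S := by
        rw [← add_assoc]
        exact ih (h + 1) (by omega) hrest (by omega) hdown (by simpa [add_assoc] using hxd)
      have hpeak : PeaksAt (d / 2 + firstStep (h + 1) ∘ (d - d / 2)) i₀ (h + 1) :=
        hd.map (fun t => t / 2 + firstStep (h + 1) (t - t / 2)) (by grind [firstStep])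
          (by grind [firstStep])
      convert ih (h + 1) (by omega) hpeak (by omega) hx hdetour using 2
      exact funext fun i => (firstStep_floorHalf_add_firstStep h (d i)).symm

lemma add_secondStep_mem (hS : DMCSet S) (hm : 0 < m) (hd : PeaksAt d i₀ (m + 1)) (hx : x ∈ S)
    (hxd : x + d ∈ S) : x + secondStep m ∘ d ∈ S := by
  have hfirst : x + firstStep (m + 1) ∘ d ∈ S := hS.add_firstStep_mem hd m.succ_pos hx hxd
  have hrest : x + firstStep (m + 1) ∘ d + (d - firstStep (m + 1) ∘ d) ∈ S := by simpa using hxd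
  have hboth : x + (firstStep (m + 1) ∘ d + secondStep m ∘ d) ∈ S := by
    rw [← add_assoc]
    exact hS.add_firstStep_mem hd.sub_firstStep hm hfirst hrest
  convert (dmcSet_iff_peaksAt.mp hS (hd.firstStep_add_secondStep hm) le_rfl hx hboth).2 using 2
  exact funext fun i => (firstStep_add_secondStep_floorHalf hm (d i)).symm

lemma add_sub_firstStep_mem (hS : DMCSet S) (hd : PeaksAt d i₀ (m + 1)) (hx : x ∈ S)
    (hxd : x + d ∈ S) : x + (d - firstStep (m + 1) ∘ d) ∈ S := by
  induction m generalizing x d with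
  | zero =>
    have hfirst : firstStep 1 ∘ d = d := funext fun i => firstStep_one (hd.abs_le i)
    simpa [hfirst] using hx
  | succ m ih =>
    have hsecond := hS.add_secondStep_mem m.succ_pos hd hx hxd
    have hfirst : firstStep (m + 1) ∘ (d - secondStep (m + 1) ∘ d) = firstStep (m + 2) ∘ d :=
      funext fun i => firstStep_sub_secondStep m.succ_pos (hd.abs_le i)
    have hrest := ih (hd.sub_secondStep m.succ_pos) hsecond (by simpa using hxd)
    rw [hfirst] at hrest
    convert hrest using 1
    abel

lemma add_stepMove_mem (hS : DMCSet S) {c : ℤ → ℤ}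
    (hc : ∀ k, c (k + 1) = c k ∨ c (k + 1) = c k + 1) (hd : PeaksAt d i₀ m) (hx : x ∈ S)
    (hxd : x + d ∈ S) : x + stepMove m c ∘ d ∈ S := by
  induction m generalizing x d c with
  | zero =>
    have hzero : d = 0 := funext fun i => by simpa using hd.abs_le i
    have hmove : stepMove 0 c ∘ d = 0 := by ext i; simp [hzero, stepMove]
    simpa [hmove] using hx
  | succ m ih =>
    have hshift (k : ℤ) := hc (k + 1)
    have hmove : stepMove (m + 1) c ∘ d = (c 1 - c 0) • (firstStep (m + 1) ∘ d) +
        stepMove m (fun k => c (k + 1)) ∘ (d - firstStep (m + 1) ∘ d) :=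
      funext fun i => stepMove_succ m c (d i)
    obtain hskip | htake : c 1 = c 0 ∨ c 1 = c 0 + 1 := by simpa using hc 0
    · have hend := hS.add_sub_firstStep_mem hd hx hxd
      simpa [hmove, hskip] using ih hshift hd.sub_firstStep hx hend
    · have hstart := hS.add_firstStep_mem hd m.succ_pos hx hxd
      simpa [hmove, htake, add_assoc] using
        ih hshift hd.sub_firstStep hstart (by simpa using hxd)

lemma add_nsmul_mem (hS : DMCSet S) {a k : ℕ} (hk : k ≤ a) (hd : PeaksAt d i₀ m) (hx : x ∈ S)
    (hxd : x + a • d ∈ S) : x + k • d ∈ S := by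
  obtain rfl | ha := a.eq_zero_or_pos
  · simpa [Nat.le_zero.mp hk] using hx
  convert hS.add_stepMove_mem (c := fun j => k * j / a) (mul_add_one_ediv_eq_or hk) (hd.nsmul a)
    hx hxd using 2
  ext i
  simpa using (stepMove_mul_ediv k ha m (d i)).symm

lemma add_nsmul_mem_of_forall_add_mem (hS : DMCSet S) (hd : PeaksAt d i₀ m) {v : Fin n → ℤ}
    (hv : ∀ z ∈ S, z + d ∈ S → z + v ∈ S) {a : ℕ} (hx : x ∈ S) (hxd : x + a • d ∈ S) :
    x + a • v ∈ S := by
  induction a generalizing x with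
  | zero => simpa using hx
  | succ a ih =>
    have hnext : x + d ∈ S := by simpa using hS.add_nsmul_mem (k := 1) (by omega) hd hx hxd
    have hleft : x + a • v ∈ S := ih hx (hS.add_nsmul_mem a.le_succ hd hx hxd)
    have hright : x + d + a • v ∈ S := ih hnext (by rwa [add_assoc, ← succ_nsmul'])
    rw [succ_nsmul, ← add_assoc]
    exact hv _ hleft (by rwa [add_right_comm])

end DMCSet

/-- Scaling a discrete midpoint convex set preserves discrete midpoint
convexity: `S^α = {x : αx ∈ S}` is discrete midpoint convex. -/
theorem dmcSet_scaling {n : ℕ} (S : Set (Fin n → ℤ)) (hS : DMCSet S)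
    (α : ℕ) (hα : 0 < α) :
    DMCSet {x : Fin n → ℤ | (α : ℤ) • x ∈ S} := by
  refine dmcSet_iff_peaksAt.mpr fun x d i₀ m hd hm hx hxd => ?_
  simp only [natCast_zsmul, smul_add, Set.mem_ofPred_eq] at hx hxd ⊢
  have hmid (z) (hz : z ∈ S) (hzd : z + d ∈ S) := dmcSet_iff_peaksAt.mp hS hd hm hz hzd
  exact ⟨hS.add_nsmul_mem_of_forall_add_mem hd (fun z hz hzd => (hmid z hz hzd).1) hx hxd,
    hS.add_nsmul_mem_of_forall_add_mem hd (fun z hz hzd => (hmid z hz hzd).2) hx hxd⟩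
end
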